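/- (The spectral invariant is a polynomial in λ = z² + z⁻².) Let T̂(z) be the N-site reflection monodromy matrix and t̂(z) = (1/2)tr T̂(z). Then there exists a polynomial q ∈ R[X] of degree at most 2N such that t̂(z)² − det T̂(z) = (z − z⁻¹)²·q(z² + z⁻²) in R[z,z⁻¹]; moreover the coefficient of X^{2N} in q equals ((P + P⁻¹)/2)², where P = ξ·Π_{j=1}^{N} k_j². -/

import Mathlib

open LaurentPolynomial

noncomputable section

/-- The local Lax matrix `L(u) = [[u k − u⁻¹ k⁻¹, e], [f, u k⁻¹ − u⁻¹ k]]` of the XXZ chain,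
as a 2×2 matrix over the Laurent polynomial ring `R[z,z⁻¹]`; the argument `v` stands for the
inverse `u⁻¹` of the unit `u`. -/
noncomputable def lax {R : Type} [CommRing R] (e f k kinv : R)
    (u v : LaurentPolynomial R) : Matrix (Fin 2) (Fin 2) (LaurentPolynomial R) :=
  !![u * C k - v * C kinv, C e; C f, u * C kinv - v * C k]

/-- The diagonal reflection matrix `K(z) = diag(ξz − ξ⁻¹z⁻¹, ξz⁻¹ − ξ⁻¹z)`, where `v` stands
for `z⁻¹`. -/
noncomputable def refK {R : Type} [CommRing R] [Algebra ℂ R] (ξ : ℂ)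
    (u v : LaurentPolynomial R) : Matrix (Fin 2) (Fin 2) (LaurentPolynomial R) :=
  !![algebraMap ℂ (LaurentPolynomial R) ξ * u - algebraMap ℂ (LaurentPolynomial R) ξ⁻¹ * v, 0;
     0, algebraMap ℂ (LaurentPolynomial R) ξ * v - algebraMap ℂ (LaurentPolynomial R) ξ⁻¹ * u]

/-- The reflection monodromy matrix
`T̂(z) = L₁(a₁z)⋯L_N(a_N z)·K(z)·L_N(z/a_N)⋯L₁(z/a₁)`, evaluated at a general unit `u`
(with `v` standing for `u⁻¹`). -/
noncomputable def thatGen {R : Type} [CommRing R] [Algebra ℂ R] (N : ℕ)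
    (e f k kinv : Fin N → R) (ξ : ℂ) (a : Fin N → ℂ) (u v : LaurentPolynomial R) :
    Matrix (Fin 2) (Fin 2) (LaurentPolynomial R) :=
  (List.ofFn fun i => lax (e i) (f i) (k i) (kinv i)
      (algebraMap ℂ (LaurentPolynomial R) (a i) * u)
      (algebraMap ℂ (LaurentPolynomial R) (a i)⁻¹ * v)).prod
  * refK ξ u v *
  ((List.ofFn fun i => lax (e i) (f i) (k i) (kinv i)
      (algebraMap ℂ (LaurentPolynomial R) (a i)⁻¹ * u)
      (algebraMap ℂ (LaurentPolynomial R) (a i) * v)).reverse).prod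

/-- The reflection monodromy matrix `T̂(z)` at `u = z`. -/
noncomputable def That {R : Type} [CommRing R] [Algebra ℂ R] (N : ℕ)
    (e f k kinv : Fin N → R) (ξ : ℂ) (a : Fin N → ℂ) :
    Matrix (Fin 2) (Fin 2) (LaurentPolynomial R) :=
  thatGen N e f k kinv ξ a (T 1) (T (-1))

/-- `t̂(z) = (1/2)·tr T̂(z)`, the reflection transfer matrix multiplied by `(z−z⁻¹)`. -/
noncomputable def tHat {R : Type} [CommRing R] [Algebra ℂ R] (N : ℕ)
    (e f k kinv : Fin N → R) (ξ : ℂ) (a : Fin N → ℂ) : LaurentPolynomial R :=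
  (2 : ℂ)⁻¹ • (That N e f k kinv ξ a).trace

/-- `Pv : Fin (N+1) → R` is the family of reflection Hamiltonians:
`2·t̂(z) = (z + z⁻¹)·(P₀ + Σ_{j=1}^{N} P_j·(z^{2j} + z^{−2j})/2)`. -/
def IsReflectionHamiltonians {R : Type} [CommRing R] [Algebra ℂ R] (N : ℕ)
    (e f k kinv : Fin N → R) (ξ : ℂ) (a : Fin N → ℂ) (Pv : Fin (N + 1) → R) : Prop :=
  (2 : ℂ) • tHat N e f k kinv ξ a
    = (T 1 + T (-1)) * (C (Pv 0) + ∑ j : Fin N, C (Pv j.succ) *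
        ((2 : ℂ)⁻¹ • (T (2 * (j.1 + 1) : ℤ) + T (-(2 * (j.1 + 1) : ℤ)))))

/-!
The spectral invariant is a quarter of the discriminant of `T̂(z)`. Since `T̂(z⁻¹)` is the adjugate
of `T̂(z)` and `T̂(-z) = -σ₃ T̂(z) σ₃`, this discriminant is invariant under `z ↦ z⁻¹` and `z ↦ -z`,
hence a polynomial in `λ = z² + z⁻²`; the lowest term `z^(-2N-1) diag(-ξ⁻¹ ∏ k⁻², ξ ∏ k²)` of
`T̂(z)` bounds its degree by `2N + 1` and gives the coefficient `(P + P⁻¹)²` of `λ^(2N+1)`.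
At `z = 1` the matrix is its own adjugate, so its discriminant vanishes there, which splits off the
factor `λ - 2 = (z - z⁻¹)²`.
-/

section LaurentPolynomials

section Semiring

variable {R : Type*} [Semiring R]

theorem coeff_T_mul (m : ℤ) (f : R[T;T⁻¹]) (j : ℤ) : (T m * f).coeff j = f.coeff (j - m) := by
  rw [T, AddMonoidAlgebra.coeff_single_mul_apply, one_mul, neg_add_eq_sub]

theorem coeff_toLaurent_natCast (p : Polynomial R) (j : ℕ) :
    (Polynomial.toLaurent p).coeff (j : ℤ) = p.coeff j := by
  rw [LaurentPolynomial.coeff_toLaurent]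
  exact Finsupp.mapDomain_apply Nat.castEmbedding.injective _ j

theorem coeff_toLaurent_of_neg (p : Polynomial R) {j : ℤ} (hj : j < 0) :
    (Polynomial.toLaurent p).coeff j = 0 := by
  rw [LaurentPolynomial.coeff_toLaurent]
  refine Finsupp.mapDomain_of_notMem_range _ _ ?_
  rintro ⟨i, rfl⟩
  exact hj.not_ge (Int.natCast_nonneg i)

end Semiring

section CommSemiring

variable {R : Type*} [CommSemiring R]

theorem eval₂_invert_one (f : R[T;T⁻¹]) :
    eval₂ (RingHom.id R) 1 (invert f) = eval₂ (RingHom.id R) 1 f := by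
  induction f using LaurentPolynomial.induction_on' with
  | add p q hp hq => simp only [map_add, hp, hq]
  | C_mul_T n r => simp

theorem eval₂_one_aeval (f : R[T;T⁻¹]) (q : Polynomial R) :
    eval₂ (RingHom.id R) 1 (Polynomial.aeval f q) = q.eval (eval₂ (RingHom.id R) 1 f) := by
  rw [Polynomial.aeval_def, Polynomial.hom_eval₂, Polynomial.eval]
  congr 1
  ext r
  simp

theorem eq_C_of_invert_eq {f : R[T;T⁻¹]} (hinv : invert f = f)
    (hlow : ∀ j : ℤ, j < 0 → f.coeff j = 0) : f = C (f.coeff 0) := by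
  ext j
  rw [C_apply]
  rcases lt_trichotomy j 0 with hj | rfl | hj
  · rw [hlow j hj, if_neg hj.ne]
  · rw [if_pos rfl]
  · rw [← hinv, invert_apply, hlow (-j) (neg_neg_of_pos hj), if_neg hj.ne']

end CommSemiring

section CommRing

variable {R : Type*} [CommRing R]

/-- The substitution `z ↦ -z` on Laurent polynomials. -/
def negArg : R[T;T⁻¹] →ₐ[R] R[T;T⁻¹] :=
  AddMonoidAlgebra.lift R R[T;T⁻¹] ℤ
    { toFun n := n.toAdd.negOnePow • T n.toAdd
      map_one' := by simp only [toAdd_one, Int.negOnePow_zero, T_zero, one_smul]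
      map_mul' m n := by
        simp only [toAdd_mul, Int.negOnePow_add, T_add, smul_mul_smul_comm] }

theorem negArg_T (n : ℤ) : negArg (T n : R[T;T⁻¹]) = n.negOnePow • T n := by
  rw [negArg, T, AddMonoidAlgebra.lift_single, one_smul]
  rfl

theorem coeff_negArg (f : R[T;T⁻¹]) (j : ℤ) : (negArg f).coeff j = j.negOnePow • f.coeff j := by
  induction f using LaurentPolynomial.induction_on' with
  | add p q hp hq =>
    simp only [map_add, AddMonoidAlgebra.coeff_add, Finsupp.add_apply, smul_add, hp, hq]
  | C_mul_T n r =>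
    rw [← smul_eq_C_mul, map_smul, negArg_T]
    simp only [AddMonoidAlgebra.coeff_smul, Finsupp.smul_apply, T_apply]
    by_cases h : n = j <;> simp [h]

theorem coeff_eq_zero_of_negArg_eq (h2 : IsRegular (2 : R)) {f : R[T;T⁻¹]} (hf : negArg f = f)
    {j : ℤ} (hj : Odd j) : f.coeff j = 0 := by
  have hcoeff : -f.coeff j = f.coeff j := by
    simpa [Int.negOnePow_odd j hj, hf] using (coeff_negArg f j).symm
  refine h2.left ?_
  linear_combination -hcoeff

theorem coeff_T_two_add_T_neg_two_pow (n : ℕ) {j : ℤ} (hj : j ≤ -(2 * n)) :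
    ((T 2 + T (-2) : R[T;T⁻¹]) ^ n).coeff j = if j = -(2 * n) then 1 else 0 := by
  induction n generalizing j with
  | zero => simp [← T_zero, eq_comm]
  | succ n ih =>
    push_cast at hj
    rw [pow_succ', add_mul, AddMonoidAlgebra.coeff_add, Finsupp.add_apply, coeff_T_mul, coeff_T_mul,
      ih (by lia), ih (by lia), if_neg (by lia), zero_add]
    congr 1
    simp only [eq_iff_iff]
    push_cast
    lia

theorem sq_T_one_sub_T_neg_one : (T 1 - T (-1) : R[T;T⁻¹]) ^ 2 = T 2 + T (-2) - 2 := by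
  have hpos : (T 2 : R[T;T⁻¹]) = T 1 ^ 2 := by rw [T_pow, mul_one, Nat.cast_ofNat]
  have hneg : (T (-2) : R[T;T⁻¹]) = T (-1) ^ 2 := by rw [T_pow, mul_neg_one, Nat.cast_ofNat]
  have hmul : (T 1 * T (-1) : R[T;T⁻¹]) = 1 := by rw [← T_add, add_neg_cancel, T_zero]
  linear_combination -hpos - hneg - 2 * hmul

theorem negArg_T_two_add_T_neg_two : negArg (T 2 + T (-2) : R[T;T⁻¹]) = T 2 + T (-2) := by
  rw [map_add, negArg_T, negArg_T, Int.negOnePow_even 2 (by decide),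
    Int.negOnePow_even (-2) (by decide), one_smul, one_smul]

theorem exists_eq_aeval_of_invert_eq_of_negArg_eq (h2 : IsRegular (2 : R)) {n : ℕ} {f : R[T;T⁻¹]}
    (hinv : invert f = f) (hneg : negArg f = f) (hlow : ∀ j : ℤ, j < -(2 * n) → f.coeff j = 0) :
    ∃ q : Polynomial R, q.natDegree ≤ n ∧ q.coeff n = f.coeff (-(2 * n)) ∧
      f = Polynomial.aeval (T 2 + T (-2) : R[T;T⁻¹]) q := by
  induction n generalizing f with
  | zero =>
    refine ⟨Polynomial.C (f.coeff 0), by simp, by simp, ?_⟩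
    rw [Polynomial.aeval_C, ← C_eq_algebraMap]
    exact eq_C_of_invert_eq hinv (by simpa using hlow)
  | succ n ih =>
    set c := f.coeff (-(2 * (n + 1 : ℕ))) with hc
    set g := f - c • (T 2 + T (-2)) ^ (n + 1) with hg
    have hginv : invert g = g := by
      simp [hg, hinv, add_comm]
    have hgneg : negArg g = g := by
      rw [hg, map_sub, map_smul, map_pow, negArg_T_two_add_T_neg_two, hneg]
    have hglow (j : ℤ) (hj : j < -(2 * n)) : g.coeff j = 0 := by
      rcases eq_or_ne j (-(2 * n + 1)) with rfl | hodd
      · exact coeff_eq_zero_of_negArg_eq h2 hgneg ⟨-(n + 1 : ℤ), by ring⟩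
      · have hj' : j ≤ -(2 * (n + 1 : ℕ)) := by push_cast; lia
        rw [hg, AddMonoidAlgebra.coeff_sub, Finsupp.sub_apply, AddMonoidAlgebra.coeff_smul,
          Finsupp.smul_apply, coeff_T_two_add_T_neg_two_pow _ hj']
        rcases hj'.eq_or_lt with rfl | hlt
        · simp [hc]
        · rw [hlow j hlt, if_neg hlt.ne, smul_zero, sub_zero]
    obtain ⟨q, hdeg, -, hq⟩ := ih hginv hgneg hglow
    refine ⟨q + c • Polynomial.X ^ (n + 1), ?_, ?_, ?_⟩
    · compute_degree!
      lia
    · simp [Polynomial.coeff_eq_zero_of_natDegree_lt (Nat.lt_succ_of_le hdeg)]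
    · rw [map_add, ← hq, map_smul, map_pow, Polynomial.aeval_X, sub_add_cancel]

end CommRing

end LaurentPolynomials

section Matrices

variable {R S : Type*} [CommRing R] [CommRing S]

theorem discr_map_fin_two (φ : R →+* S) (M : Matrix (Fin 2) (Fin 2) R) :
    (M.map φ).discr = φ M.discr := by
  simp [Matrix.discr_fin_two, Matrix.trace_fin_two, Matrix.det_fin_two, map_ofNat]

theorem discr_diag_fin_two (x y : R) : !![x, 0; 0, y].discr = (y - x) ^ 2 := by
  rw [Matrix.discr_fin_two, Matrix.trace_fin_two_of, Matrix.det_fin_two_of]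
  ring

theorem discr_adjugate_fin_two (M : Matrix (Fin 2) (Fin 2) R) : M.adjugate.discr = M.discr := by
  rw [Matrix.discr_fin_two, Matrix.discr_fin_two, Matrix.adjugate_fin_two, Matrix.trace_fin_two_of,
    Matrix.det_fin_two_of, Matrix.trace_fin_two, Matrix.det_fin_two]
  ring

theorem discr_eq_zero_of_adjugate_eq {M : Matrix (Fin 2) (Fin 2) R} (hM : M.adjugate = M) :
    M.discr = 0 := by
  have hdiag : M 1 1 = M 0 0 := by
    simpa [Matrix.adjugate_fin_two] using congrFun₂ hM 0 0
  have hoff : -M 0 1 = M 0 1 := by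
    simpa [Matrix.adjugate_fin_two] using congrFun₂ hM 0 1
  rw [Matrix.discr_fin_two, Matrix.trace_fin_two, Matrix.det_fin_two, hdiag]
  linear_combination -2 * M 1 0 * hoff

/-- The Pauli matrix `σ₃`; conjugation by it expresses the symmetry of `T̂` under `z ↦ -z`. -/
def pauliZ (R : Type*) [CommRing R] : Matrix (Fin 2) (Fin 2) R :=
  !![1, 0; 0, -1]

theorem pauliZ_mul_self : pauliZ R * pauliZ R = 1 := by
  simp [pauliZ, Matrix.one_fin_two]

theorem discr_neg_pauliZ_conj (M : Matrix (Fin 2) (Fin 2) R) :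
    (-(pauliZ R * M * pauliZ R)).discr = M.discr := by
  rw [M.eta_fin_two]
  simp [Matrix.discr_fin_two, pauliZ]
  ring

/-- `M = A zⁿ + (higher powers of z)`, encoded as `M = zⁿ P` with `P` a matrix of polynomials whose
constant coefficients form `A`; the matrix `A` may be zero. -/
def HasLowestTerm {ι : Type*} (n : ℤ) (A : Matrix ι ι R) (M : Matrix ι ι R[T;T⁻¹]) : Prop :=
  ∃ P : Matrix ι ι (Polynomial R),
    P.map Polynomial.constantCoeff = A ∧ M = (T n : R[T;T⁻¹]) • P.map Polynomial.toLaurent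

theorem HasLowestTerm.mul {ι : Type*} [Fintype ι] {m n : ℤ} {A B : Matrix ι ι R}
    {M N : Matrix ι ι R[T;T⁻¹]} (hM : HasLowestTerm m A M) (hN : HasLowestTerm n B N) :
    HasLowestTerm (m + n) (A * B) (M * N) := by
  obtain ⟨P, rfl, rfl⟩ := hM
  obtain ⟨Q, rfl, rfl⟩ := hN
  exact ⟨P * Q, Matrix.map_mul, by rw [Matrix.map_mul, smul_mul_smul_comm, T_add]⟩

theorem HasLowestTerm.exists_discr_eq {n : ℤ} {A : Matrix (Fin 2) (Fin 2) R}
    {M : Matrix (Fin 2) (Fin 2) R[T;T⁻¹]} (hM : HasLowestTerm n A M) :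
    ∃ p : Polynomial R, p.coeff 0 = A.discr ∧ M.discr = T (2 * n) * Polynomial.toLaurent p := by
  obtain ⟨P, rfl, rfl⟩ := hM
  refine ⟨P.discr, (discr_map_fin_two Polynomial.constantCoeff P).symm, ?_⟩
  rw [← discr_map_fin_two, Matrix.discr_fin_two, Matrix.discr_fin_two, Matrix.trace_smul,
    Matrix.det_smul, Fintype.card_fin, two_mul, T_add, smul_eq_mul]
  ring

theorem exists_discr_eq_aeval (h2 : IsRegular (2 : R)) {n : ℕ} {A : Matrix (Fin 2) (Fin 2) R}
    {M : Matrix (Fin 2) (Fin 2) R[T;T⁻¹]} (hinv : M.map invert = M.adjugate)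
    (hneg : M.map negArg = -(pauliZ _ * M * pauliZ _)) (hlow : HasLowestTerm (-n) A M) :
    ∃ q : Polynomial R, q.natDegree ≤ n ∧ q.coeff n = A.discr ∧
      M.discr = Polynomial.aeval (T 2 + T (-2) : R[T;T⁻¹]) q := by
  obtain ⟨p, hp, hMp⟩ := hlow.exists_discr_eq
  have hcoeff (j : ℤ) : M.discr.coeff j = (Polynomial.toLaurent p).coeff (j + 2 * n) := by
    rw [hMp, coeff_T_mul, mul_neg, sub_neg_eq_add]
  have hdiscr_inv : invert M.discr = M.discr :=
    calc invert M.discr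
        = (M.map invert).discr := (discr_map_fin_two (invert : R[T;T⁻¹] ≃ₐ[R] _).toRingHom M).symm
      _ = M.discr := by rw [hinv, discr_adjugate_fin_two]
  have hdiscr_neg : negArg M.discr = M.discr :=
    calc negArg M.discr
        = (M.map negArg).discr := (discr_map_fin_two negArg.toRingHom M).symm
      _ = M.discr := by rw [hneg, discr_neg_pauliZ_conj]
  obtain ⟨q, hdeg, hlead, hq⟩ :=
    exists_eq_aeval_of_invert_eq_of_negArg_eq h2 (n := n) hdiscr_inv hdiscr_neg
      fun j hj => by rw [hcoeff, coeff_toLaurent_of_neg _ (by lia)]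
  refine ⟨q, hdeg, ?_, hq⟩
  rw [hlead, hcoeff, neg_add_cancel, ← Nat.cast_zero, coeff_toLaurent_natCast, hp]

theorem eval₂_one_discr_eq_zero {M : Matrix (Fin 2) (Fin 2) R[T;T⁻¹]}
    (hinv : M.map invert = M.adjugate) :
    eval₂ (RingHom.id R) 1 M.discr = 0 := by
  rw [← discr_map_fin_two]
  refine discr_eq_zero_of_adjugate_eq ?_
  calc (M.map (eval₂ (RingHom.id R) 1)).adjugate
      = M.adjugate.map (eval₂ (RingHom.id R) 1) := (RingHom.map_adjugate _ M).symm
    _ = M.map (eval₂ (RingHom.id R) 1) := by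
      rw [← hinv, Matrix.map_map]
      exact congrArg M.map (funext eval₂_invert_one)

theorem exists_discr_eq_sq_mul_aeval (h2 : IsRegular (2 : R)) {n : ℕ}
    {A : Matrix (Fin 2) (Fin 2) R} {M : Matrix (Fin 2) (Fin 2) R[T;T⁻¹]}
    (hinv : M.map invert = M.adjugate) (hneg : M.map negArg = -(pauliZ _ * M * pauliZ _))
    (hlow : HasLowestTerm (-(n + 1 : ℕ)) A M) :
    ∃ q : Polynomial R, q.natDegree ≤ n ∧ q.coeff n = A.discr ∧
      M.discr = (T 1 - T (-1)) ^ 2 * Polynomial.aeval (T 2 + T (-2) : R[T;T⁻¹]) q := by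
  obtain ⟨r, hdeg, hlead, hr⟩ := exists_discr_eq_aeval h2 hinv hneg hlow
  have hroot : r.IsRoot 2 := by
    have htwo : eval₂ (RingHom.id R) 1 (T 2 + T (-2)) = 2 := by
      simp [one_add_one_eq_two]
    rw [Polynomial.IsRoot, ← htwo, ← eval₂_one_aeval, ← hr, eval₂_one_discr_eq_zero hinv]
  obtain ⟨q, rfl⟩ := Polynomial.dvd_iff_isRoot.2 hroot
  have hdegq : q.natDegree ≤ n := by
    nontriviality R
    rcases eq_or_ne q 0 with rfl | hq
    · exact Nat.zero_le n
    · rw [(Polynomial.monic_X_sub_C 2).natDegree_mul' hq, Polynomial.natDegree_X_sub_C] at hdeg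
      lia
  refine ⟨q, hdegq, ?_, ?_⟩
  · rw [← hlead, Polynomial.coeff_X_sub_C_mul,
      Polynomial.coeff_eq_zero_of_natDegree_lt (Nat.lt_succ_of_le hdegq), mul_zero, sub_zero]
  · rw [hr, map_mul, map_sub, Polynomial.aeval_X, map_ofNat, map_ofNat, sq_T_one_sub_T_neg_one]

end Matrices

section Monodromy

variable {R : Type} [CommRing R]

theorem lax_swap (e f k kinv : R) (u v : R[T;T⁻¹]) :
    lax e f k kinv v u = -(lax e f k kinv u v).adjugate := by
  simp [lax, Matrix.adjugate_fin_two_of]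

theorem lax_neg (e f k kinv : R) (u v : R[T;T⁻¹]) :
    lax e f k kinv (-u) (-v) = -(pauliZ _ * lax e f k kinv u v * pauliZ _) := by
  simp [lax, pauliZ, neg_add_eq_sub]

theorem map_lax (φ : R[T;T⁻¹] →ₐ[R] R[T;T⁻¹]) (e f k kinv : R) (u v : R[T;T⁻¹]) :
    (lax e f k kinv u v).map φ = lax e f k kinv (φ u) (φ v) := by
  have hC (r : R) : φ (C r) = C r := φ.commutes r
  ext i j
  fin_cases i <;> fin_cases j <;> simp [lax, hC]

theorem hasLowestTerm_lax (e f k kinv x y : R) :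
    HasLowestTerm (-1) !![-(y * kinv), 0; 0, -(y * k)]
      (lax e f k kinv (C x * T 1) (C y * T (-1))) := by
  refine ⟨!![.C (x * k) * .X ^ 2 - .C (y * kinv), .C e * .X;
    .C f * .X, .C (x * kinv) * .X ^ 2 - .C (y * k)], ?_, ?_⟩
  · ext i j
    fin_cases i <;> fin_cases j <;> simp
  · ext i j : 1
    fin_cases i <;> fin_cases j <;> simp [lax, sub_mul, mul_right_comm _ (T _) (C _)]

variable [Algebra ℂ R]

theorem refK_swap (ξ : ℂ) (u v : R[T;T⁻¹]) : refK ξ v u = (refK ξ u v).adjugate := by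
  simp [refK, Matrix.adjugate_fin_two_of]

theorem refK_neg (ξ : ℂ) (u v : R[T;T⁻¹]) :
    refK ξ (-u) (-v) = -(pauliZ _ * refK ξ u v * pauliZ _) := by
  simp [refK, pauliZ, neg_add_eq_sub]

theorem map_refK (φ : R[T;T⁻¹] →ₐ[R] R[T;T⁻¹]) (ξ : ℂ) (u v : R[T;T⁻¹]) :
    (refK ξ u v).map φ = refK ξ (φ u) (φ v) := by
  have hC (r : R) : φ (C r) = C r := φ.commutes r
  ext i j
  fin_cases i <;> fin_cases j <;> simp [refK, hC]

theorem hasLowestTerm_refK (ξ : ℂ) :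
    HasLowestTerm (-1) !![-algebraMap ℂ R ξ⁻¹, 0; 0, algebraMap ℂ R ξ]
      (refK ξ (T 1) (T (-1)) : Matrix _ _ R[T;T⁻¹]) := by
  refine ⟨!![.C (algebraMap ℂ R ξ) * .X ^ 2 - .C (algebraMap ℂ R ξ⁻¹), 0;
    0, .C (algebraMap ℂ R ξ) - .C (algebraMap ℂ R ξ⁻¹) * .X ^ 2], ?_, ?_⟩
  · ext i j
    fin_cases i <;> fin_cases j <;> simp
  · ext i j : 1
    fin_cases i <;> fin_cases j <;> simp [refK, sub_mul]

variable (N : ℕ) (ξ : ℂ)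

theorem thatGen_zero (e f k kinv : Fin 0 → R) (a : Fin 0 → ℂ) (u v : R[T;T⁻¹]) :
    thatGen 0 e f k kinv ξ a u v = refK ξ u v := by
  simp [thatGen]

theorem thatGen_succ (e f k kinv : Fin (N + 1) → R) (a : Fin (N + 1) → ℂ) (u v : R[T;T⁻¹]) :
    thatGen (N + 1) e f k kinv ξ a u v =
      lax (e 0) (f 0) (k 0) (kinv 0) (algebraMap ℂ _ (a 0) * u) (algebraMap ℂ _ (a 0)⁻¹ * v) *
        thatGen N (Fin.tail e) (Fin.tail f) (Fin.tail k) (Fin.tail kinv) ξ (Fin.tail a) u v *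
        lax (e 0) (f 0) (k 0) (kinv 0) (algebraMap ℂ _ (a 0)⁻¹ * u) (algebraMap ℂ _ (a 0) * v) := by
  simp only [thatGen, List.ofFn_succ, List.prod_cons, List.reverse_cons, List.prod_append,
    List.prod_nil, mul_one, mul_assoc, Fin.tail]

theorem thatGen_swap (e f k kinv : Fin N → R) (a : Fin N → ℂ) (u v : R[T;T⁻¹]) :
    thatGen N e f k kinv ξ a v u = (thatGen N e f k kinv ξ a u v).adjugate := by
  induction N with
  | zero => rw [thatGen_zero, thatGen_zero, refK_swap]
  | succ N ih =>
    rw [thatGen_succ, thatGen_succ, ih, lax_swap, lax_swap _ _ _ _ (_ * u),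
      Matrix.adjugate_mul_distrib, Matrix.adjugate_mul_distrib, neg_mul, neg_mul_neg, mul_assoc]

theorem thatGen_neg (e f k kinv : Fin N → R) (a : Fin N → ℂ) (u v : R[T;T⁻¹]) :
    thatGen N e f k kinv ξ a (-u) (-v) =
      -(pauliZ _ * thatGen N e f k kinv ξ a u v * pauliZ _) := by
  induction N with
  | zero => rw [thatGen_zero, thatGen_zero, refK_neg]
  | succ N ih =>
    simp only [thatGen_succ, ih, mul_neg, lax_neg, neg_mul, neg_neg]
    have hσ (X : Matrix (Fin 2) (Fin 2) R[T;T⁻¹]) : pauliZ _ * (pauliZ _ * X) = X := by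
      rw [← mul_assoc, pauliZ_mul_self, one_mul]
    simp only [mul_assoc, hσ]

theorem map_thatGen (φ : R[T;T⁻¹] →ₐ[R] R[T;T⁻¹]) (e f k kinv : Fin N → R) (a : Fin N → ℂ)
    (u v : R[T;T⁻¹]) :
    (thatGen N e f k kinv ξ a u v).map φ = thatGen N e f k kinv ξ a (φ u) (φ v) := by
  have hφ (x : ℂ) : φ (algebraMap ℂ _ x) = algebraMap ℂ _ x := (φ.restrictScalars ℂ).commutes x
  induction N with
  | zero => rw [thatGen_zero, thatGen_zero, map_refK]
  | succ N ih => simp only [thatGen_succ, Matrix.map_mul, map_lax, ih, map_mul, hφ]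

theorem That_map_invert (e f k kinv : Fin N → R) (a : Fin N → ℂ) :
    (That N e f k kinv ξ a).map invert = (That N e f k kinv ξ a).adjugate := by
  have hmap := map_thatGen N ξ (invert : R[T;T⁻¹] ≃ₐ[R] _).toAlgHom e f k kinv a (T 1) (T (-1))
  change _ = thatGen N e f k kinv ξ a (invert (T 1)) (invert (T (-1))) at hmap
  rw [invert_T, invert_T, neg_neg, thatGen_swap N ξ e f k kinv a (T 1)] at hmap
  exact hmap

theorem That_map_negArg (e f k kinv : Fin N → R) (a : Fin N → ℂ) :
    (That N e f k kinv ξ a).map negArg =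
      -(pauliZ _ * That N e f k kinv ξ a * pauliZ _) := by
  rw [That, map_thatGen, ← thatGen_neg, negArg_T, negArg_T]
  simp

theorem hasLowestTerm_That (e f k kinv : Fin N → R) (a : Fin N → ℂ) (ha : ∀ i, a i ≠ 0) :
    HasLowestTerm (-(2 * N + 1 : ℕ))
      !![-(algebraMap ℂ R ξ⁻¹ * ∏ i, kinv i ^ 2), 0; 0, algebraMap ℂ R ξ * ∏ i, k i ^ 2]
      (That N e f k kinv ξ a) := by
  induction N with
  | zero => simpa [That, thatGen_zero] using hasLowestTerm_refK ξ
  | succ N ih =>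
    have ha0 : algebraMap ℂ R (a 0)⁻¹ * algebraMap ℂ R (a 0) = 1 := by
      rw [← map_mul, inv_mul_cancel₀ (ha 0), map_one]
    have hmul (c : R) (y : Fin (N + 1) → R) :
        algebraMap ℂ R (a 0)⁻¹ * y 0 * (c * ∏ i, Fin.tail y i ^ 2) * (algebraMap ℂ R (a 0) * y 0) =
          c * ∏ i, y i ^ 2 := by
      simp only [Fin.prod_univ_succ, Fin.tail]
      linear_combination (c * y 0 ^ 2 * ∏ i : Fin N, y i.succ ^ 2) * ha0
    have hlax (x y : ℂ) := hasLowestTerm_lax (e 0) (f 0) (k 0) (kinv 0) (algebraMap ℂ R x)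
      (algebraMap ℂ R y)
    have hprod := ((hlax (a 0) (a 0)⁻¹).mul (ih (Fin.tail e) (Fin.tail f) (Fin.tail k)
      (Fin.tail kinv) (Fin.tail a) fun i => ha i.succ)).mul (hlax (a 0)⁻¹ (a 0))
    rw [That, thatGen_succ]
    convert hprod using 1
    · push_cast
      ring
    · simp [hmul]
    · rfl

theorem tHat_sq_sub_det (e f k kinv : Fin N → R) (a : Fin N → ℂ) :
    tHat N e f k kinv ξ a ^ 2 - (That N e f k kinv ξ a).det =
      (2 : ℂ)⁻¹ ^ 2 • (That N e f k kinv ξ a).discr := by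
  have hdet : (2 : ℂ)⁻¹ ^ 2 • (4 * (That N e f k kinv ξ a).det) = (That N e f k kinv ξ a).det := by
    rw [← map_ofNat (algebraMap ℂ R[T;T⁻¹]) 4, ← Algebra.smul_def, smul_smul]
    norm_num
  rw [tHat, smul_pow, Matrix.discr_fin_two, smul_sub, hdet]

end Monodromy

/-- the spectral invariant is a polynomial in `λ = z² + z⁻²`: there is a
polynomial `q` of degree at most `2N` with
`t̂(z)² − det T̂(z) = (z − z⁻¹)²·q(z² + z⁻²)`, whose coefficient of `X^{2N}` is
`((P + P⁻¹)/2)²` with `P = ξ·Π_j k_j²`. -/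
theorem spectral_invariant_polynomial_in_lambda (R : Type) [CommRing R] [Algebra ℂ R]
    (N : ℕ) (hN : 1 ≤ N) (e f k kinv : Fin N → R) (hk : ∀ i, k i * kinv i = 1)
    (ξ : ℂ) (hξ : ξ ≠ 0) (a : Fin N → ℂ) (ha : ∀ i, a i ≠ 0) :
    ∃ q : Polynomial R, q.natDegree ≤ 2 * N ∧
      (tHat N e f k kinv ξ a) ^ 2 - (That N e f k kinv ξ a).det
        = (T 1 - T (-1)) ^ 2 * Polynomial.aeval (T 2 + T (-2) : LaurentPolynomial R) q ∧
      q.coeff (2 * N)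
        = ((2 : ℂ)⁻¹ • (algebraMap ℂ R ξ * ∏ i : Fin N, (k i) ^ 2
            + algebraMap ℂ R ξ⁻¹ * ∏ i : Fin N, (kinv i) ^ 2)) ^ 2 := by
  have h2 : IsRegular (2 : R) :=
    map_ofNat (algebraMap ℂ R) 2 ▸ ((IsUnit.mk0 (2 : ℂ) two_ne_zero).map (algebraMap ℂ R)).isRegular
  obtain ⟨q, hdeg, hlead, hq⟩ := exists_discr_eq_sq_mul_aeval h2
    (That_map_invert N ξ e f k kinv a) (That_map_negArg N ξ e f k kinv a)
    (hasLowestTerm_That N ξ e f k kinv a ha)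
  refine ⟨(2 : ℂ)⁻¹ ^ 2 • q, (Polynomial.natDegree_smul_le _ q).trans hdeg, ?_, ?_⟩
  · rw [tHat_sq_sub_det, hq, AlgHom.map_smul_of_tower, mul_smul_comm]
  · rw [Polynomial.coeff_smul, hlead, discr_diag_fin_two, smul_pow, sub_neg_eq_add]

end
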